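/- Let [a,b] ⊂ ℝ be a compact interval and f₀ a probability density on [a,b] with f₀ > 0 and TV(log f₀) < ∞. Let x₁,...,xₙ ∈ [a,b], let λ ≥ 0, and let f̂ be a probability density on [a,b] with f̂ > 0 and TV(log f̂) < ∞ satisfying the optimality comparison −(1/n)Σᵢ log f̂(xᵢ) + λ·TV(log f̂) ≤ −(1/n)Σᵢ log f₀(xᵢ) + λ·TV(log f₀). Then, writing ĥ² = h²(f̂, f₀), Î = TV(log f̂), I₀ = TV(log f₀), and p_{f̂} = (1/2) log((f̂ + f₀)/(2f₀)), one has ĥ² ≤ 16 (P_n − P)(p_{f̂}) + 4λ(I₀ − Î), where P_n(g) = (1/n)Σᵢ g(xᵢ) and P(g) = ∫ₐᵇ g(x) f₀(x) dx. -/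

import Mathlib

open MeasureTheory Set

/-- The total variation of `g` on `[a,b]`, as a real number. -/
noncomputable def TVr (a b : ℝ) (g : ℝ → ℝ) : ℝ :=
  (eVariationOn g (Set.Icc a b)).toReal

/-- The squared Hellinger distance `h²(f,g) = (1/2)∫ₐᵇ (√f - √g)²`. -/
noncomputable def hellSq (a b : ℝ) (f g : ℝ → ℝ) : ℝ :=
  (1 / 2) * ∫ t in Set.Icc a b, (Real.sqrt (f t) - Real.sqrt (g t)) ^ 2

/-!
Let `m = (f + f₀) / 2`. Averaging `f` with `f₀` costs only a constant factor,
`h²(f, f₀) ≤ 16 h²(m, f₀)`, and makes the log-ratio `log (m / f₀)` bounded below, so that it is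
always `f₀`-integrable. The bound of the Hellinger distance by the Kullback–Leibler divergence
then gives `h²(m, f₀) ≤ -P(p_f)`. On the empirical side, concavity of the logarithm gives
`(log f - log f₀) / 4 ≤ p_f`, so the optimality of `f` bounds `16 Pₙ(p_f)` from below by four
times the difference of the penalties.
-/

section Pointwise

variable {u v : ℝ}

/-- The function `p_f = (1/2) log ((f + f₀) / (2 f₀))` at a point where `f` takes the value `u`
and `f₀` the value `v`. It is half the log-ratio of the average of the two densities to `f₀`, and
plays the role of the log-likelihood ratio. -/
noncomputable def halfLogMidpointRatio (u v : ℝ) : ℝ :=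
  (1 / 2) * Real.log ((u + v) / (2 * v))

lemma sq_sqrt_sub_sqrt_le_add (hu : 0 ≤ u) (hv : 0 ≤ v) : (√u - √v) ^ 2 ≤ u + v := by
  nlinarith [Real.sq_sqrt hu, Real.sq_sqrt hv, Real.sqrt_nonneg u, Real.sqrt_nonneg v]

lemma abs_sqrt_sub_sqrt_le_four_mul_abs_sqrt_midpoint_sub_sqrt (hu : 0 ≤ u) (hv : 0 < v) :
    |√u - √v| ≤ 4 * |√((u + v) / 2) - √v| := by
  set r := √((u + v) / 2) with hr
  have hsum_pos : 0 < √u + √v := by positivity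
  have hr_le : r ≤ √u + √v := by
    rw [hr, Real.sqrt_le_left hsum_pos.le]
    nlinarith [Real.sq_sqrt hu, Real.sq_sqrt hv.le, Real.sqrt_nonneg u, Real.sqrt_nonneg v]
  have hfactor : (√u - √v) * (√u + √v) = 2 * ((r - √v) * (r + √v)) := by
    have hr_sq : r ^ 2 = (u + v) / 2 := Real.sq_sqrt (by positivity)
    linear_combination Real.sq_sqrt hu + Real.sq_sqrt hv.le - 2 * hr_sq
  refine le_of_mul_le_mul_right ?_ hsum_pos
  calc |√u - √v| * (√u + √v)
      = |(√u - √v) * (√u + √v)| := by rw [abs_mul, abs_of_pos hsum_pos]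
    _ = 2 * |r - √v| * (r + √v) := by
        rw [hfactor, abs_mul, abs_mul, abs_two, abs_of_nonneg (a := r + √v) (by positivity),
          mul_assoc]
    _ ≤ 2 * |r - √v| * (2 * (√u + √v)) := by
        gcongr
        linarith [Real.sqrt_nonneg u]
    _ = 4 * |r - √v| * (√u + √v) := by ring

lemma sq_sqrt_sub_sqrt_le_sub_sub_log_div_mul (hu : 0 < u) (hv : 0 < v) :
    (√u - √v) ^ 2 ≤ u - v - Real.log (u / v) * v := by
  have hlog : Real.log (u / v) ≤ 2 * (√u / √v - 1) := by
    have := Real.log_le_sub_one_of_pos (Real.sqrt_pos.2 (div_pos hu hv))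
    rw [Real.log_sqrt (by positivity), Real.sqrt_div hu.le] at this
    linarith
  have hquot : √u / √v * v = √u * √v := by
    rw [div_mul_eq_mul_div, mul_div_assoc, Real.div_sqrt]
  calc (√u - √v) ^ 2 = u - v - 2 * (√u / √v - 1) * v := by
        linear_combination Real.sq_sqrt hu.le + Real.sq_sqrt hv.le + 2 * hquot
    _ ≤ u - v - Real.log (u / v) * v := by gcongr

lemma abs_halfLogMidpointRatio_mul_le_add (hu : 0 ≤ u) (hv : 0 < v) :
    |halfLogMidpointRatio u v * v| ≤ u + v := by
  have hratio_pos : 0 < (u + v) / (2 * v) := by positivity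
  have hinv_le : ((u + v) / (2 * v))⁻¹ ≤ 2 := by
    rw [inv_div, div_le_iff₀ (by positivity)]
    linarith
  have hlower : -1 ≤ Real.log ((u + v) / (2 * v)) := by
    linarith [Real.one_sub_inv_le_log_of_pos hratio_pos]
  have hupper : Real.log ((u + v) / (2 * v)) * v ≤ (u - v) / 2 :=
    calc Real.log ((u + v) / (2 * v)) * v ≤ ((u + v) / (2 * v) - 1) * v := by
          gcongr
          exact Real.log_le_sub_one_of_pos hratio_pos
      _ = (u - v) / 2 := by
          field_simp
          ring
  rw [halfLogMidpointRatio, abs_le]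
  constructor <;> nlinarith

lemma log_sub_log_div_four_le_halfLogMidpointRatio (hu : 0 < u) (hv : 0 < v) :
    (Real.log u - Real.log v) / 4 ≤ halfLogMidpointRatio u v := by
  have hamgm : u / v ≤ ((u + v) / (2 * v)) ^ 2 := by
    rw [div_pow, div_le_div_iff₀ hv (by positivity)]
    nlinarith [mul_nonneg hv.le (sq_nonneg (u - v))]
  have hlog := Real.log_le_log (by positivity) hamgm
  rw [Real.log_pow, Real.log_div hu.ne' hv.ne'] at hlog
  push_cast at hlog
  rw [halfLogMidpointRatio]
  linarith

end Pointwise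

section Hellinger

variable {α : Type*} [MeasurableSpace α] {μ : Measure α} {f g : α → ℝ}

/-- The squared Hellinger distance of the densities `f` and `g` with respect to `μ`; `hellSq` is
the case of Lebesgue measure on `[a, b]`. -/
noncomputable def hellingerSq (μ : Measure α) (f g : α → ℝ) : ℝ :=
  (1 / 2) * ∫ t, (√(f t) - √(g t)) ^ 2 ∂μ

lemma integrable_sq_sqrt_sub_sqrt (hf : 0 ≤ᵐ[μ] f) (hg : 0 ≤ᵐ[μ] g)
    (hfi : Integrable f μ) (hgi : Integrable g μ) :
    Integrable (fun t => (√(f t) - √(g t)) ^ 2) μ := by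
  refine (hfi.add hgi).mono'
    ((hfi.aemeasurable.sqrt.sub hgi.aemeasurable.sqrt).pow_const 2).aestronglyMeasurable ?_
  filter_upwards [hf, hg] with t hft hgt
  rw [Real.norm_of_nonneg (sq_nonneg _)]
  exact sq_sqrt_sub_sqrt_le_add hft hgt

lemma integrable_halfLogMidpointRatio_mul (hf : 0 ≤ᵐ[μ] f) (hg : ∀ᵐ t ∂μ, 0 < g t)
    (hfi : Integrable f μ) (hgi : Integrable g μ) :
    Integrable (fun t => halfLogMidpointRatio (f t) (g t) * g t) μ := by
  have hfm := hfi.aemeasurable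
  have hgm := hgi.aemeasurable
  refine (hfi.add hgi).mono' ((((hfm.add hgm).div (hgm.const_mul 2)).log.const_mul
    (1 / 2)).mul hgm).aestronglyMeasurable ?_
  filter_upwards [hf, hg] with t hft hgt
  exact abs_halfLogMidpointRatio_mul_le_add hft hgt

lemma hellingerSq_le_sixteen_mul_hellingerSq_midpoint (hf : 0 ≤ᵐ[μ] f) (hg : ∀ᵐ t ∂μ, 0 < g t)
    (hfi : Integrable f μ) (hgi : Integrable g μ) :
    hellingerSq μ f g ≤ 16 * hellingerSq μ (fun t => (f t + g t) / 2) g := by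
  have hg' : 0 ≤ᵐ[μ] g := hg.mono fun _ => le_of_lt
  have hmid : 0 ≤ᵐ[μ] fun t => (f t + g t) / 2 := by
    filter_upwards [hf, hg'] with t hft hgt
    exact div_nonneg (add_nonneg hft hgt) zero_le_two
  have hle : ∫ t, (√(f t) - √(g t)) ^ 2 ∂μ ≤
      ∫ t, 16 * (√((f t + g t) / 2) - √(g t)) ^ 2 ∂μ := by
    refine integral_mono_ae (integrable_sq_sqrt_sub_sqrt hf hg' hfi hgi)
      ((integrable_sq_sqrt_sub_sqrt hmid hg' ((hfi.add hgi).div_const 2) hgi).const_mul 16) ?_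
    filter_upwards [hf, hg] with t hft hgt
    have := pow_le_pow_left₀ (abs_nonneg _)
      (abs_sqrt_sub_sqrt_le_four_mul_abs_sqrt_midpoint_sub_sqrt hft hgt) 2
    rw [mul_pow, sq_abs, sq_abs] at this
    linarith
  rw [integral_const_mul] at hle
  rw [hellingerSq, hellingerSq]
  linarith

lemma two_mul_hellingerSq_le_neg_integral_log_div_mul (hf : ∀ᵐ t ∂μ, 0 < f t)
    (hg : ∀ᵐ t ∂μ, 0 < g t) (hfi : Integrable f μ) (hgi : Integrable g μ)
    (hlog : Integrable (fun t => Real.log (f t / g t) * g t) μ)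
    (hmass : ∫ t, f t ∂μ ≤ ∫ t, g t ∂μ) :
    2 * hellingerSq μ f g ≤ -∫ t, Real.log (f t / g t) * g t ∂μ :=
  calc 2 * hellingerSq μ f g = ∫ t, (√(f t) - √(g t)) ^ 2 ∂μ := by
        rw [hellingerSq]
        ring
    _ ≤ ∫ t, (f t - g t - Real.log (f t / g t) * g t) ∂μ := by
        refine integral_mono_of_nonneg (ae_of_all _ fun t => sq_nonneg _)
          ((hfi.sub hgi).sub hlog) ?_
        filter_upwards [hf, hg] with t hft hgt
        exact sq_sqrt_sub_sqrt_le_sub_sub_log_div_mul hft hgt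
    _ = ∫ t, f t ∂μ - ∫ t, g t ∂μ - ∫ t, Real.log (f t / g t) * g t ∂μ := by
        rw [← integral_sub hfi hgi]
        exact integral_sub (hfi.sub hgi) hlog
    _ ≤ -∫ t, Real.log (f t / g t) * g t ∂μ := by linarith

lemma hellingerSq_le_neg_sixteen_mul_integral_halfLogMidpointRatio_mul
    (hf : 0 ≤ᵐ[μ] f) (hg : ∀ᵐ t ∂μ, 0 < g t) (hfi : Integrable f μ) (hgi : Integrable g μ)
    (hmass : ∫ t, f t ∂μ ≤ ∫ t, g t ∂μ) :
    hellingerSq μ f g ≤ -16 * ∫ t, halfLogMidpointRatio (f t) (g t) * g t ∂μ := by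
  have hmid_pos : ∀ᵐ t ∂μ, 0 < (f t + g t) / 2 := by
    filter_upwards [hf, hg] with t hft hgt
    exact half_pos (add_pos_of_nonneg_of_pos hft hgt)
  have hmid_mass : ∫ t, (f t + g t) / 2 ∂μ ≤ ∫ t, g t ∂μ := by
    rw [integral_div, integral_add hfi hgi]
    linarith
  have hlog_eq : (fun t => Real.log ((f t + g t) / 2 / g t) * g t) =
      fun t => 2 * (halfLogMidpointRatio (f t) (g t) * g t) := by
    funext t
    rw [halfLogMidpointRatio, div_div]
    ring
  have hkl := two_mul_hellingerSq_le_neg_integral_log_div_mul hmid_pos hg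
    ((hfi.add hgi).div_const 2) hgi
    (hlog_eq ▸ (integrable_halfLogMidpointRatio_mul hf hg hfi hgi).const_mul 2) hmid_mass
  rw [hlog_eq, integral_const_mul] at hkl
  linarith [hellingerSq_le_sixteen_mul_hellingerSq_midpoint hf hg hfi hgi]

end Hellinger

theorem stmt_6_general {α ι : Type*} [MeasurableSpace α] [Fintype ι] {μ : Measure α}
    {f f₀ : α → ℝ} (hf : 0 ≤ᵐ[μ] f) (hf₀ : ∀ᵐ t ∂μ, 0 < f₀ t)
    (hfi : Integrable f μ) (hf₀i : Integrable f₀ μ) (hmass : ∫ t, f t ∂μ ≤ ∫ t, f₀ t ∂μ)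
    {x : ι → α} (hfx : ∀ i, 0 < f (x i)) (hf₀x : ∀ i, 0 < f₀ (x i))
    {w : ι → ℝ} (hw : ∀ i, 0 ≤ w i) {pen pen₀ : ℝ}
    (hopt : -∑ i, w i * Real.log (f (x i)) + pen ≤ -∑ i, w i * Real.log (f₀ (x i)) + pen₀) :
    hellingerSq μ f f₀ ≤
      16 * (∑ i, w i * halfLogMidpointRatio (f (x i)) (f₀ (x i))
        - ∫ t, halfLogMidpointRatio (f t) (f₀ t) * f₀ t ∂μ) + 4 * (pen₀ - pen) := by
  have hempirical : (∑ i, w i * Real.log (f (x i)) - ∑ i, w i * Real.log (f₀ (x i))) / 4 ≤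
      ∑ i, w i * halfLogMidpointRatio (f (x i)) (f₀ (x i)) := by
    rw [← Finset.sum_sub_distrib, Finset.sum_div]
    refine Finset.sum_le_sum fun i _ => ?_
    rw [← mul_sub, mul_div_assoc]
    exact mul_le_mul_of_nonneg_left
      (log_sub_log_div_four_le_halfLogMidpointRatio (hfx i) (hf₀x i)) (hw i)
  linarith [hellingerSq_le_neg_sixteen_mul_integral_halfLogMidpointRatio_mul hf hf₀ hfi hf₀i hmass]

/-- the basic inequality.  If `f̂` satisfies the optimality
comparison against `f₀` for the penalized log-likelihood, then
`h²(f̂,f₀) ≤ 16 (Pₙ - P)(p_{f̂}) + 4λ(I₀ - Î)` where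
`p_{f̂} = (1/2) log((f̂ + f₀)/(2f₀))`, `Î = TV(log f̂)`, `I₀ = TV(log f₀)`,
`Pₙ(g) = (1/n)Σᵢ g(xᵢ)` and `P(g) = ∫ₐᵇ g f₀`. -/
theorem stmt_6 (a b : ℝ) (hab : a < b) (n : ℕ) (hn : 1 ≤ n)
    (f₀ fhat : ℝ → ℝ)
    (hf₀pos : ∀ t ∈ Icc a b, 0 < f₀ t)
    (hf₀int : IntegrableOn f₀ (Icc a b))
    (hf₀one : (∫ t in Icc a b, f₀ t) = 1)
    (hf₀TV : eVariationOn (fun t => Real.log (f₀ t)) (Icc a b) ≠ ⊤)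
    (hfpos : ∀ t ∈ Icc a b, 0 < fhat t)
    (hfint : IntegrableOn fhat (Icc a b))
    (hfone : (∫ t in Icc a b, fhat t) = 1)
    (hfTV : eVariationOn (fun t => Real.log (fhat t)) (Icc a b) ≠ ⊤)
    (x : Fin n → ℝ) (hx : ∀ i, x i ∈ Icc a b)
    (lam : ℝ) (hlam : 0 ≤ lam)
    (hopt :
      -(1 / (n : ℝ)) * ∑ i, Real.log (fhat (x i))
        + lam * TVr a b (fun t => Real.log (fhat t))
      ≤ -(1 / (n : ℝ)) * ∑ i, Real.log (f₀ (x i))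
        + lam * TVr a b (fun t => Real.log (f₀ t))) :
    hellSq a b fhat f₀ ≤
      16 * ((1 / (n : ℝ)) *
          (∑ i, (1 / 2) * Real.log ((fhat (x i) + f₀ (x i)) / (2 * f₀ (x i))))
        - ∫ t in Icc a b,
            ((1 / 2) * Real.log ((fhat t + f₀ t) / (2 * f₀ t))) * f₀ t)
      + 4 * lam * (TVr a b (fun t => Real.log (f₀ t))
          - TVr a b (fun t => Real.log (fhat t))) := by
  simp only [neg_mul, Finset.mul_sum, Finset.sum_neg_distrib] at hopt ⊢
  rw [mul_assoc 4 lam, mul_sub lam]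
  exact stmt_6_general (ae_restrict_of_forall_mem measurableSet_Icc fun t ht => (hfpos t ht).le)
    (ae_restrict_of_forall_mem measurableSet_Icc hf₀pos) hfint hf₀int (hfone.trans hf₀one.symm).le
    (fun i => hfpos _ (hx i)) (fun i => hf₀pos _ (hx i)) (fun _ => by positivity) hopt
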